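/- arXiv:2212.03323 — 2 statements merged into one kernel-verified Lean document; each statement's English description precedes it below -/
import Mathlib

section
/- Let N ≥ 1, let a > 2 be a real number, and let ρ, ρ' ∈ ℝ^N with ρ_i, ρ'_i ∈ [−a/2, a/2] for all i ∈ {1,…,N}. If r(ρ) < r(ρ'), then R(ρ) > R(ρ'). (That is, the reward function R is rank-preserving: strictly higher-ranked robustness vectors receive strictly higher reward.) -/
open Finset

/-- The step function: 0 on negative reals, 1 otherwise (real-valued). -/
noncomputable def stp (x : ℝ) : ℝ := if x < 0 then 0 else 1

/-- The step function with natural-number values. -/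
noncomputable def stepNat (x : ℝ) : ℕ := if x < 0 then 0 else 1

/-- The rank of a robustness vector `ρ ∈ ℝ^N`:
`r(ρ) = 2^N - ∑_{i=1}^N 2^{N-i} step(ρ_i)` (index `i : Fin N` encodes rule `i+1`). -/
noncomputable def rnk {N : ℕ} (ρ : Fin N → ℝ) : ℕ :=
  2 ^ N - ∑ i : Fin N, 2 ^ (N - 1 - (i : ℕ)) * stepNat (ρ i)

/-- The reward `R(ρ) = ∑_{i=1}^N ( a^{N-i+1} step(ρ_i) + ρ_i / N )`
(index `i : Fin N` encodes rule `i+1`, so the exponent is `N - i`). -/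
noncomputable def rwd {N : ℕ} (a : ℝ) (ρ : Fin N → ℝ) : ℝ :=
  ∑ i : Fin N, (a ^ (N - (i : ℕ)) * stp (ρ i) + ρ i / N)

lemma stp_nonneg (x : ℝ) : 0 ≤ stp x := by
  unfold stp; split_ifs <;> norm_num

lemma stp_le_one (x : ℝ) : stp x ≤ 1 := by
  unfold stp; split_ifs <;> norm_num

lemma sum_two_lt (n : ℕ) (ρ : Fin n → ℝ) :
    ∑ i : Fin n, 2 ^ (n - 1 - (i : ℕ)) * stepNat (ρ i) + 1 ≤ 2 ^ n := by
  induction n with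
  | zero => simp
  | succ n ih =>
    have e : ∀ i : Fin n, n + 1 - 1 - ((i.succ : Fin (n + 1)) : ℕ) = n - 1 - (i : ℕ) := by
      intro i; simp only [Fin.val_succ]; omega
    rw [Fin.sum_univ_succ]
    simp only [e]
    have := ih (fun i => ρ i.succ)
    have h1 : stepNat (ρ 0) ≤ 1 := by unfold stepNat; split_ifs <;> norm_num
    have h2 := Nat.mul_le_mul_left (2 ^ n) h1
    simp only [Fin.val_zero, Nat.add_sub_cancel, Nat.sub_zero, pow_succ]
    omega

lemma sum_a_le (a : ℝ) (ha : 2 < a) (n : ℕ) (ρ : Fin n → ℝ) :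
    ∑ i : Fin n, a ^ (n - (i : ℕ)) * stp (ρ i) ≤ a ^ (n + 1) - a := by
  induction n with
  | zero => simp
  | succ n ih =>
    have e : ∀ i : Fin n, n + 1 - ((i.succ : Fin (n + 1)) : ℕ) = n - (i : ℕ) := by
      intro i; simp only [Fin.val_succ]; omega
    rw [Fin.sum_univ_succ]
    simp only [e]
    have := ih (fun i => ρ i.succ)
    have hp : 0 < a ^ (n + 1) := by positivity
    have h2 := mul_le_mul_of_nonneg_left (stp_le_one (ρ 0)) hp.le
    simp only [Fin.val_zero, Nat.sub_zero]
    rw [pow_succ a (n + 1)]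
    nlinarith

lemma sum_gap (a : ℝ) (ha : 2 < a) (n : ℕ) (ρ ρ' : Fin n → ℝ)
    (h : ∑ i : Fin n, 2 ^ (n - 1 - (i : ℕ)) * stepNat (ρ' i)
      < ∑ i : Fin n, 2 ^ (n - 1 - (i : ℕ)) * stepNat (ρ i)) :
    ∑ i : Fin n, a ^ (n - (i : ℕ)) * stp (ρ' i) + a
      ≤ ∑ i : Fin n, a ^ (n - (i : ℕ)) * stp (ρ i) := by
  induction n with
  | zero => simp at h
  | succ n ih =>
    have e : ∀ i : Fin n, n + 1 - ((i.succ : Fin (n + 1)) : ℕ) = n - (i : ℕ) := by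
      intro i; simp only [Fin.val_succ]; omega
    have e' : ∀ i : Fin n, n + 1 - 1 - ((i.succ : Fin (n + 1)) : ℕ) = n - 1 - (i : ℕ) := by
      intro i; simp only [Fin.val_succ]; omega
    rw [Fin.sum_univ_succ, Fin.sum_univ_succ] at h ⊢
    simp only [e'] at h
    simp only [e]
    simp only [Fin.val_zero, Nat.sub_zero, Nat.add_sub_cancel] at h ⊢
    have IH := ih (fun i => ρ i.succ) (fun i => ρ' i.succ)
    have b := sum_two_lt n (fun i => ρ i.succ)
    have c := sum_a_le a ha n (fun i => ρ' i.succ)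
    have d : 0 ≤ ∑ i : Fin n, a ^ (n - (i : ℕ)) * stp (ρ i.succ) :=
      Finset.sum_nonneg fun i _ => mul_nonneg (by positivity) (stp_nonneg _)
    by_cases h0 : ρ 0 < 0 <;> by_cases h1 : ρ' 0 < 0
    · have s0 : stp (ρ 0) = 0 := by simp [stp, h0]
      have s1 : stp (ρ' 0) = 0 := by simp [stp, h1]
      have t0 : stepNat (ρ 0) = 0 := by simp [stepNat, h0]
      have t1 : stepNat (ρ' 0) = 0 := by simp [stepNat, h1]
      rw [t0, t1] at h
      rw [s0, s1]
      have := IH (by omega)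
      linarith
    · have s0 : stepNat (ρ 0) = 0 := by simp [stepNat, h0]
      have s1 : stepNat (ρ' 0) = 1 := by simp [stepNat, h1]
      rw [s0, s1] at h
      omega
    · have s0 : stp (ρ 0) = 1 := by simp [stp, h0]
      have s1 : stp (ρ' 0) = 0 := by simp [stp, h1]
      rw [s0, s1]
      linarith
    · have s0 : stp (ρ 0) = 1 := by simp [stp, h0]
      have s1 : stp (ρ' 0) = 1 := by simp [stp, h1]
      have t0 : stepNat (ρ 0) = 1 := by simp [stepNat, h0]
      have t1 : stepNat (ρ' 0) = 1 := by simp [stepNat, h1]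
      rw [t0, t1] at h
      rw [s0, s1]
      have := IH (by omega)
      linarith

/-- the reward `R` is rank-preserving. -/
theorem rank_preserving_reward {N : ℕ} (hN : 1 ≤ N) (a : ℝ) (ha : 2 < a)
    (ρ ρ' : Fin N → ℝ)
    (hρ : ∀ i, ρ i ∈ Set.Icc (-a / 2) (a / 2))
    (hρ' : ∀ i, ρ' i ∈ Set.Icc (-a / 2) (a / 2))
    (h : rnk ρ < rnk ρ') :
    rwd a ρ > rwd a ρ' := by
  have hlt : ∑ i : Fin N, 2 ^ (N - 1 - (i : ℕ)) * stepNat (ρ' i)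
      < ∑ i : Fin N, 2 ^ (N - 1 - (i : ℕ)) * stepNat (ρ i) := by
    unfold rnk at h; omega
  have gap := sum_gap a ha N ρ ρ' hlt
  obtain ⟨j, -, hj⟩ := Finset.exists_lt_of_sum_lt hlt
  have hj' := lt_of_mul_lt_mul_left hj (Nat.zero_le _)
  have hjρ : 0 ≤ ρ j := by
    by_contra hc
    simp [stepNat, not_le.mp hc] at hj'
  have hNp : (0 : ℝ) < N := by exact_mod_cast hN
  have key : ∑ i : Fin N, (ρ' i / N) < ∑ i : Fin N, (ρ i / N + a / N) := by
    apply Finset.sum_lt_sum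
    · intro i _
      rw [← add_div]
      apply div_le_div_of_nonneg_right _ hNp.le
      linarith [(hρ i).1, (hρ' i).2]
    · refine ⟨j, Finset.mem_univ _, ?_⟩
      rw [← add_div]
      apply div_lt_div_of_pos_right _ hNp
      linarith [(hρ' j).2]
  rw [Finset.sum_add_distrib] at key
  have hc : ∑ _i : Fin N, a / (N : ℝ) = a := by
    simp; field_simp
  rw [hc] at key
  unfold rwd
  rw [Finset.sum_add_distrib, Finset.sum_add_distrib]
  linarith
end

section
/- Let N ≥ 1, let a > 2 be a real number, and let S be a nonempty finite set of vectors ρ ∈ ℝ^N with all components in [−a/2, a/2]. If ρ* ∈ S satisfies R(ρ*) ≥ R(ρ) for all ρ ∈ S, then r(ρ*) ≤ r(ρ) for all ρ ∈ S. (Maximizing the rank-preserving reward over a finite set of robustness vectors selects a vector of minimal rank, so planning with R avoids checking all 2^N rule-satisfaction combinations.) -/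
open Finset

theorem geom_two_aux : ∀ (n : ℕ) (t : Fin n → ℕ), (∀ i, t i ≤ 1) →
    ∑ i : Fin n, 2 ^ (n - 1 - (i : ℕ)) * t i < 2 ^ n := by
  intro n
  induction n with
  | zero => intro t _; simp
  | succ n ih =>
    intro t ht
    rw [Fin.sum_univ_succ]
    have h := ih (fun i => t i.succ) (fun i => ht _)
    have e : ∀ i : Fin n, n + 1 - 1 - ((i.succ : Fin (n + 1)) : ℕ) = n - 1 - (i : ℕ) := by
      intro i; simp only [Fin.val_succ]; omega
    simp only [e]
    have h0 : 2 ^ (n + 1 - 1 - ((0 : Fin (n + 1)) : ℕ)) * t 0 ≤ 2 ^ n := by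
      simpa using Nat.mul_le_mul_left (2 ^ n) (ht 0)
    rw [pow_succ]
    omega

theorem geom_a_aux (a : ℝ) (ha : 2 < a) : ∀ (n : ℕ) (t : Fin n → ℕ), (∀ i, t i ≤ 1) →
    ∑ i : Fin n, a ^ (n - (i : ℕ)) * (t i : ℝ) + a ≤ a ^ (n + 1) := by
  intro n
  induction n with
  | zero => intro t _; simp
  | succ n ih =>
    intro t ht
    rw [Fin.sum_univ_succ]
    have h := ih (fun i => t i.succ) (fun i => ht _)
    have e : ∀ i : Fin n, n + 1 - ((i.succ : Fin (n + 1)) : ℕ) = n - (i : ℕ) := by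
      intro i; simp only [Fin.val_succ]; omega
    simp only [e]
    have hp : 0 < a ^ (n + 1) := by positivity
    have h0 : a ^ (n + 1 - ((0 : Fin (n + 1)) : ℕ)) * (t 0 : ℝ) ≤ a ^ (n + 1) := by
      have : (t 0 : ℝ) ≤ 1 := by exact_mod_cast ht 0
      simpa using mul_le_mul_of_nonneg_left this hp.le
    rw [pow_succ a (n + 1)]
    nlinarith

theorem lex_aux (a : ℝ) (ha : 2 < a) : ∀ (n : ℕ) (s t : Fin n → ℕ), (∀ i, s i ≤ 1) →
    (∀ i, t i ≤ 1) →
    ∑ i : Fin n, 2 ^ (n - 1 - (i : ℕ)) * s i < ∑ i : Fin n, 2 ^ (n - 1 - (i : ℕ)) * t i →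
    ∑ i : Fin n, a ^ (n - (i : ℕ)) * (s i : ℝ) + a ≤ ∑ i : Fin n, a ^ (n - (i : ℕ)) * (t i : ℝ) := by
  intro n
  induction n with
  | zero => intro s t _ _ h; simp at h
  | succ n ih =>
    intro s t hs ht
    have e : ∀ i : Fin n, n + 1 - 1 - ((i.succ : Fin (n + 1)) : ℕ) = n - 1 - (i : ℕ) := by
      intro i; simp only [Fin.val_succ]; omega
    have e' : ∀ i : Fin n, n + 1 - ((i.succ : Fin (n + 1)) : ℕ) = n - (i : ℕ) := by
      intro i; simp only [Fin.val_succ]; omega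
    simp only [Fin.sum_univ_succ, e, e']
    have h := ih (fun i => s i.succ) (fun i => t i.succ) (fun i => hs _) (fun i => ht _)
    have hA := geom_a_aux a ha n (fun i => s i.succ) (fun i => hs _)
    have hB := geom_two_aux n (fun i => t i.succ) (fun i => ht _)
    have hC : 0 ≤ ∑ i : Fin n, a ^ (n - (i : ℕ)) * (t i.succ : ℝ) :=
      Finset.sum_nonneg (fun i _ => by positivity)
    intro hlt
    have h1 := hs 0
    have h2 := ht 0
    have hs0 : s 0 = 0 ∨ s 0 = 1 := by omega
    have ht0 : t 0 = 0 ∨ t 0 = 1 := by omega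
    rcases hs0 with hs0 | hs0 <;> rcases ht0 with ht0 | ht0 <;>
      simp [hs0, ht0] at hlt h hA hB ⊢
    · exact h hlt
    · linarith
    · omega
    · linarith [h hlt]

/-- maximizing the rank-preserving reward over a finite set of admissible
robustness vectors selects a vector of minimal rank. -/
theorem reward_argmax_minimizes_rank {N : ℕ} (hN : 1 ≤ N) (a : ℝ) (ha : 2 < a)
    (S : Finset (Fin N → ℝ)) (hS : S.Nonempty)
    (hadm : ∀ ρ ∈ S, ∀ i, ρ i ∈ Set.Icc (-a / 2) (a / 2))
    (ρstar : Fin N → ℝ) (hmem : ρstar ∈ S)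
    (hmax : ∀ ρ ∈ S, rwd a ρ ≤ rwd a ρstar) :
    ∀ ρ ∈ S, rnk ρstar ≤ rnk ρ := by
  intro ρ hρ
  by_contra hcon
  have hlt : ∑ i : Fin N, 2 ^ (N - 1 - (i : ℕ)) * stepNat (ρstar i)
      < ∑ i : Fin N, 2 ^ (N - 1 - (i : ℕ)) * stepNat (ρ i) := by
    unfold rnk at hcon
    omega
  have hle : ∀ x, stepNat x ≤ 1 := by
    intro x; unfold stepNat; split_ifs <;> omega
  have hcast : ∀ x, stp x = (stepNat x : ℝ) := by
    intro x; unfold stp stepNat; split_ifs <;> simp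
  have key := lex_aux a ha N (fun i => stepNat (ρstar i)) (fun i => stepNat (ρ i))
    (fun i => hle _) (fun i => hle _) hlt
  have hm := hmax ρ hρ
  simp only [rwd, hcast, Finset.sum_add_distrib, ← Finset.sum_div] at hm
  have hNpos : (0 : ℝ) < N := by exact_mod_cast hN
  obtain ⟨k, -, hk⟩ := Finset.exists_ne_zero_of_sum_ne_zero (Nat.ne_zero_of_lt hlt)
  have hk0 : 0 ≤ ρ k := by
    by_contra hneg
    exact hk (by simp [stepNat, not_le.mp hneg])
  have hsum : ∑ i : Fin N, (ρstar i - a) < ∑ i : Fin N, ρ i := by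
    apply Finset.sum_lt_sum
    · intro i _
      have h1 := (hadm ρ hρ i).1
      have h2 := (hadm ρstar hmem i).2
      linarith
    · refine ⟨k, Finset.mem_univ _, ?_⟩
      have h2 := (hadm ρstar hmem k).2
      linarith
  simp only [Finset.sum_sub_distrib, Finset.sum_const, Finset.card_univ, Fintype.card_fin,
    nsmul_eq_mul] at hsum
  have hdiv : (∑ i : Fin N, ρstar i) / N - a < (∑ i : Fin N, ρ i) / N := by
    rw [lt_div_iff₀ hNpos, sub_mul, div_mul_cancel₀ _ hNpos.ne']
    linarith
  linarith
end
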